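/- Let 𝔽 be a finite field and let 𝒢(z) be a k×n matrix with entries in 𝔽[λ₀][z]. Let q₁,…,q_t ∈ 𝔽[λ₀] be polynomials, and for any finite field extension 𝔽′ of 𝔽 set U(𝔽′) = {α ∈ 𝔽′ : q_i(α) ≠ 0 for all i}. Assume that for every finite extension 𝔽′ and every α ∈ U(𝔽′) the specialized matrix 𝒢_α(z) over 𝔽′[z] is a canonical (basic and reduced) generator matrix of degree δ, and denote by C_α^{𝔽′} the convolutional code over 𝔽′ it generates. Suppose there exist a finite extension 𝔽″ of 𝔽 and α ∈ U(𝔽″) such that C_α^{𝔽″} is MDS. Then there exists N ∈ ℕ, depending only on the family, such that for every finite extension 𝔽′ of 𝔽 the number of α ∈ U(𝔽′) for which C_α^{𝔽′} is not MDS is at most N. -/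

import Mathlib

open Polynomial

/-- The weight of a vector of polynomials: the total number of nonzero coefficients. -/
noncomputable def polyWeight {F : Type*} [Field F] {n : ℕ} (c : Fin n → Polynomial F) : ℕ :=
  ∑ j, (c j).support.card

/-- The free distance of a submodule of `𝔽[z]ⁿ`: the minimal weight of a nonzero element. -/
noncomputable def freeDist {F : Type*} [Field F] {n : ℕ}
    (C : Submodule (Polynomial F) (Fin n → Polynomial F)) : ℕ :=
  sInf {d | ∃ c ∈ C, c ≠ 0 ∧ polyWeight c = d}

/-- The Hamming weight of a vector. -/
noncomputable def hammingWt {F : Type*} [Field F] {n : ℕ} (v : Fin n → F) : ℕ :=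
  Set.ncard {j | v j ≠ 0}

/-- The minimum distance of a linear block code. -/
noncomputable def minDist {F : Type*} [Field F] {n : ℕ} (C : Submodule F (Fin n → F)) : ℕ :=
  sInf {d | ∃ v ∈ C, v ≠ 0 ∧ hammingWt v = d}

/-- The `l`-th row distance of the convolutional code with generator matrix `G`. -/
noncomputable def rowDist {F : Type*} [Field F] {k n : ℕ}
    (G : Fin k → Fin n → Polynomial F) (l : ℕ) : ℕ :=
  sInf {d | ∃ α : Fin k → Polynomial F, α ≠ 0 ∧ (∀ i, (α i).natDegree ≤ l) ∧
    polyWeight (fun j => ∑ i, α i * G i j) = d}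

/-- The set of maximal (`k × k`) minors of a `k × n` polynomial matrix. -/
def maximalMinors {F : Type*} [Field F] {k n : ℕ} (G : Fin k → Fin n → Polynomial F) :
    Set (Polynomial F) :=
  {p | ∃ φ : Fin k ↪ Fin n, p = Matrix.det (Matrix.of fun i j => G i (φ j))}

/-- A generator matrix is basic when its maximal minors are coprime, i.e. generate the
unit ideal of `𝔽[z]`. -/
def IsBasic {F : Type*} [Field F] {k n : ℕ} (G : Fin k → Fin n → Polynomial F) : Prop :=
  Ideal.span (maximalMinors G) = ⊤

/-- The degree of the code: the highest degree of the maximal minors of a generator matrix. -/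
noncomputable def degCode {F : Type*} [Field F] {k n : ℕ}
    (G : Fin k → Fin n → Polynomial F) : ℕ :=
  sSup (Polynomial.natDegree '' maximalMinors G)

/-- The degree of the `i`-th row of a polynomial matrix. -/
noncomputable def rowDeg {F : Type*} [Field F] {k n : ℕ}
    (G : Fin k → Fin n → Polynomial F) (i : Fin k) : ℕ :=
  Finset.univ.sup fun j => (G i j).natDegree

/-- A generator matrix is reduced when the sum of its row degrees equals the maximal degree
of its maximal minors. -/
def IsReducedMatrix {F : Type*} [Field F] {k n : ℕ} (G : Fin k → Fin n → Polynomial F) : Prop :=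
  (∑ i, rowDeg G i) = degCode G

/-- A generator matrix is canonical when it is basic and reduced. -/
def IsCanonical {F : Type*} [Field F] {k n : ℕ} (G : Fin k → Fin n → Polynomial F) : Prop :=
  IsBasic G ∧ IsReducedMatrix G

/-- A finite field extension of `F`, bundled as a structure. -/
structure FinFieldExt (F : Type) [Field F] : Type 1 where
  carrier : Type
  [field : Field carrier]
  [alg : Algebra F carrier]
  [findim : FiniteDimensional F carrier]

attribute [instance] FinFieldExt.field FinFieldExt.alg FinFieldExt.findim

/-! The maximal minors of a basic matrix `G` generate the unit ideal, so by Cramer's rule its row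
span is the kernel of a parity-check matrix whose entries are polynomials in those of `G`. For a
family `𝒢` this matrix specializes along with `𝒢`, and its degrees are bounded uniformly in the
parameter.

A codeword with a run of zero coefficients longer than the degrees of the parity checks splits into
two codewords. Hence a code of free distance less than `D` has a nonzero codeword supported on
fewer than `D` positions of a finite set that depends only on the family and on `D`. That there is
no such codeword on a given support `S` means that a linear system over `𝔽[λ₀]` specializes to one
of full column rank. If this happens for one parameter, then some minor of the system is a nonzero
polynomial, and it happens for all parameters outside the roots of that minor.

Taking `D` to be the free distance of the MDS member of the family, the product over all `S` of
these minors is a nonzero polynomial; at a parameter which is not a root, the free distance is at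
least `D`, and by the generalized Singleton bound the code is MDS. -/

section ParityCheck

open Matrix

variable {R κ ν : Type*} [CommRing R]

/-- The code generated by the matrix `G`: the submodule of row vectors `u G`. -/
abbrev rowSpan (G : Matrix κ ν R) : Submodule R (ν → R) :=
  Submodule.span R (Set.range G.row)

theorem mem_rowSpan_iff [Fintype κ] {G : Matrix κ ν R} {c : ν → R} :
    c ∈ rowSpan G ↔ ∃ u, u ᵥ* G = c := by
  rw [rowSpan, ← range_vecMulLinear, LinearMap.mem_range]
  rfl

/-- The matrix with `G * columnSelection φ` consisting of the columns of `G` chosen by `φ`. -/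
def columnSelection (R : Type*) [CommRing R] [DecidableEq ν] (φ : κ → ν) : Matrix ν κ R :=
  (1 : Matrix ν ν R).submatrix id φ

theorem map_columnSelection {S : Type*} [CommRing S] [DecidableEq ν] (f : R →+* S) (φ : κ → ν) :
    (columnSelection R φ).map f = columnSelection S φ := by
  rw [columnSelection, ← submatrix_map, Matrix.map_one f f.map_zero f.map_one, columnSelection]

theorem mul_columnSelection {μ : Type*} [Fintype ν] [DecidableEq ν] (G : Matrix μ ν R)
    (φ : κ → ν) : G * columnSelection R φ = G.submatrix id φ := by
  ext i j
  simp [columnSelection, Matrix.mul_apply, one_apply]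

variable [Fintype κ] [DecidableEq κ]

theorem linearIndependent_row_of_span_minors_eq_top {G : Matrix κ ν R}
    (hG : Ideal.span (Set.range fun φ : κ ↪ ν => (G.submatrix id φ).det) = ⊤) :
    LinearIndependent R G.row := by
  rw [← vecMul_injective_iff, ← coe_vecMulLinear, ← LinearMap.ker_eq_bot, LinearMap.ker_eq_bot']
  intro u hu
  refine Submodule.mem_of_span_top_of_smul_mem ⊥ _ hG u ?_
  rintro ⟨_, φ, rfl⟩
  change (G.submatrix id φ).det • u = 0
  have hφ : u ᵥ* G.submatrix id φ = 0 := funext fun i => congrFun hu (φ i)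
  rw [← vecMul_one u, ← vecMul_smul, ← mul_adjugate, ← vecMul_vecMul, hφ, zero_vecMul]

variable [Fintype ν] [DecidableEq ν]

/-- The parity checks on the row span of `G` attached to a matrix `E` (in practice a column
selection): `det (G E)` times the projection along the row span given by Cramer's rule. -/
noncomputable def parityBlock (G : Matrix κ ν R) (E : Matrix ν κ R) : Matrix ν ν R :=
  (G * E).det • 1 - E * (G * E).adjugate * G

theorem mul_parityBlock (G : Matrix κ ν R) (E : Matrix ν κ R) : G * parityBlock G E = 0 := by
  rw [parityBlock, Matrix.mul_sub, Matrix.mul_smul, Matrix.mul_one, ← Matrix.mul_assoc,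
    ← Matrix.mul_assoc, mul_adjugate, Matrix.smul_mul, Matrix.one_mul, sub_self]

theorem vecMul_parityBlock (G : Matrix κ ν R) (E : Matrix ν κ R) (c : ν → R) :
    c ᵥ* parityBlock G E = (G * E).det • c - (c ᵥ* (E * (G * E).adjugate)) ᵥ* G := by
  rw [parityBlock, vecMul_sub, vecMul_smul, vecMul_one, vecMul_vecMul]

theorem map_parityBlock {S : Type*} [CommRing S] (f : R →+* S) (G : Matrix κ ν R)
    (E : Matrix ν κ R) : (parityBlock G E).map f = parityBlock (G.map f) (E.map f) := by
  have hadj := f.map_adjugate (G * E)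
  have hdet := f.map_det (G * E)
  simp only [RingHom.mapMatrix_apply, Matrix.map_mul] at hadj hdet
  rw [parityBlock, Matrix.map_sub f f.map_sub, map_smul' f _ _ f.map_mul, Matrix.map_mul,
    Matrix.map_mul, Matrix.map_one f f.map_zero f.map_one, hadj, hdet, parityBlock]

/-- A parity-check matrix of the row span of `G`, made of the blocks of all choices `φ` of
columns. Its entries are polynomials in those of `G`, so it specializes along with `G`. -/
noncomputable def parityCheck (G : Matrix κ ν R) : Matrix ν ((κ ↪ ν) × ν) R :=
  of fun j x => parityBlock G (columnSelection R x.1) j x.2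

theorem vecMul_parityCheck_eq_zero_iff {G : Matrix κ ν R} {c : ν → R} :
    c ᵥ* parityCheck G = 0 ↔ ∀ φ : κ ↪ ν, c ᵥ* parityBlock G (columnSelection R φ) = 0 :=
  ⟨fun h φ => funext fun j => congrFun h (φ, j), fun h => funext fun x => congrFun (h x.1) x.2⟩

theorem map_parityCheck {S : Type*} [CommRing S] (f : R →+* S) (G : Matrix κ ν R) :
    (parityCheck G).map f = parityCheck (G.map f) := by
  ext j x
  have h := map_parityBlock f G (columnSelection R x.1)
  rw [map_columnSelection] at h
  exact congrFun (congrFun h j) x.2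

theorem mem_rowSpan_iff_vecMul_parityCheck_eq_zero {G : Matrix κ ν R}
    (hG : Ideal.span (Set.range fun φ : κ ↪ ν => (G.submatrix id φ).det) = ⊤) {c : ν → R} :
    c ∈ rowSpan G ↔ c ᵥ* parityCheck G = 0 := by
  rw [vecMul_parityCheck_eq_zero_iff]
  constructor
  · rw [mem_rowSpan_iff]
    rintro ⟨u, rfl⟩ φ
    rw [vecMul_vecMul, mul_parityBlock, vecMul_zero]
  · intro hc
    refine Submodule.mem_of_span_top_of_smul_mem _ _ hG c ?_
    rintro ⟨_, φ, rfl⟩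
    have h := hc φ
    rw [vecMul_parityBlock, sub_eq_zero, mul_columnSelection] at h
    exact mem_rowSpan_iff.2 ⟨_, h.symm⟩

theorem IsBasic.span_minors_eq_top {K : Type*} [Field K] {k n : ℕ}
    {G : Matrix (Fin k) (Fin n) K[X]} (hG : IsBasic G) :
    Ideal.span (Set.range fun φ : Fin k ↪ Fin n => (G.submatrix id φ).det) = ⊤ := by
  rw [← hG]
  congr 1
  ext p
  exact exists_congr fun _ => eq_comm

end ParityCheck

section Weight

variable {R K : Type*} [Semiring R] [Field K] {n : ℕ}

theorem freeDist_le_polyWeight {C : Submodule K[X] (Fin n → K[X])} {c : Fin n → K[X]}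
    (hc : c ∈ C) (hc0 : c ≠ 0) : freeDist C ≤ polyWeight c :=
  Nat.sInf_le ⟨c, hc, hc0, rfl⟩

theorem exists_polyWeight_eq_freeDist {C : Submodule K[X] (Fin n → K[X])} (hC : C ≠ ⊥) :
    ∃ c ∈ C, c ≠ 0 ∧ polyWeight c = freeDist C := by
  obtain ⟨c, hc, hc0⟩ := C.exists_mem_ne_zero_of_ne_bot hC
  exact Nat.sInf_mem (s := {d | ∃ c ∈ C, c ≠ 0 ∧ polyWeight c = d}) ⟨_, c, hc, hc0, rfl⟩

/-- The positions `⟨j, t⟩` such that `z ^ t` has a nonzero coefficient in the entry `c j`; the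
weight of `c` is their number. -/
def coeffSupport (c : Fin n → R[X]) : Finset (Σ _ : Fin n, ℕ) :=
  Finset.univ.sigma fun j => (c j).support

theorem mem_coeffSupport {c : Fin n → R[X]} {p : Σ _ : Fin n, ℕ} :
    p ∈ coeffSupport c ↔ (c p.1).coeff p.2 ≠ 0 := by
  simp [coeffSupport]

theorem card_coeffSupport (c : Fin n → K[X]) : (coeffSupport c).card = polyWeight c :=
  Finset.card_sigma _ _

/-- The positions of the coefficients of degree less than `L`. -/
def coeffBox (n L : ℕ) : Finset (Σ _ : Fin n, ℕ) :=
  Finset.univ.sigma fun _ => Finset.range L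

theorem card_coeffBox (n L : ℕ) : (coeffBox n L).card = n * L := by
  simp [coeffBox]

theorem coeffBox_mono (n : ℕ) {L L' : ℕ} (h : L ≤ L') : coeffBox n L ⊆ coeffBox n L' :=
  Finset.sigma_mono subset_rfl fun _ => Finset.range_mono h

theorem coeffSupport_subset_coeffBox {c : Fin n → R[X]} {L : ℕ} (hc : ∀ j, (c j).degree < L) :
    coeffSupport c ⊆ coeffBox n L := by
  refine Finset.sigma_mono subset_rfl fun j t ht => Finset.mem_range.2 ?_
  exact_mod_cast (le_degree_of_mem_supp t ht).trans_lt (hc j)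

end Weight

section Gap

open Matrix

variable {R : Type*} [CommRing R]

theorem coeff_modByMonic_X_pow (p : R[X]) (b t : ℕ) :
    (p %ₘ X ^ b).coeff t = if t < b then p.coeff t else 0 := by
  split_ifs with ht
  · conv_rhs => rw [← modByMonic_add_div p (X ^ b)]
    rw [coeff_add, coeff_X_pow_mul', if_neg ht.not_ge, add_zero]
  · nontriviality R
    refine coeff_eq_zero_of_degree_lt ((degree_modByMonic_lt p (monic_X_pow b)).trans_le ?_)
    rw [degree_X_pow]
    exact_mod_cast not_lt.1 ht

theorem coeff_divByMonic_X_pow (p : R[X]) (b t : ℕ) :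
    (p /ₘ X ^ b).coeff t = p.coeff (t + b) := by
  conv_rhs => rw [← modByMonic_add_div p (X ^ b)]
  rw [coeff_add, coeff_modByMonic_X_pow, if_neg (by lia), zero_add, coeff_X_pow_mul]

theorem eq_zero_of_add_X_pow_mul_eq_zero {p q : R[X]} {b : ℕ}
    (hp : p.natDegree < b) (h : p + X ^ b * q = 0) : p = 0 ∧ q = 0 := by
  nontriviality R
  have hdeg : p.degree < (X ^ b : R[X]).degree := by
    rw [degree_X_pow]
    exact degree_le_natDegree.trans_lt (by exact_mod_cast hp)
  obtain ⟨hq, hp⟩ := div_modByMonic_unique q p (monic_X_pow b) ⟨h, hdeg⟩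
  exact ⟨by rw [← hp, zero_modByMonic], by rw [← hq, zero_divByMonic]⟩

theorem vecMul_modByMonic_divByMonic_eq_zero {ν ι : Type*} [Fintype ν]
    {P : Matrix ν ι R[X]} {c : ν → R[X]} {a m : ℕ} (hP : ∀ j i, (P j i).natDegree ≤ m)
    (hc : c ᵥ* P = 0) (hgap : ∀ j t, a ≤ t → t < a + (m + 1) → (c j).coeff t = 0) :
    (fun j => c j %ₘ X ^ (a + (m + 1))) ᵥ* P = 0 ∧
      (fun j => c j /ₘ X ^ (a + (m + 1))) ᵥ* P = 0 := by
  set r : ν → R[X] := fun j => c j %ₘ X ^ (a + (m + 1))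
  set s : ν → R[X] := fun j => c j /ₘ X ^ (a + (m + 1))
  have hr : ∀ j, (r j).natDegree ≤ a := fun j => natDegree_le_iff_coeff_eq_zero.2 fun t ht => by
    rw [coeff_modByMonic_X_pow]
    split_ifs with htm
    exacts [hgap j t ht.le htm, rfl]
  have hsplit : c = r + (X ^ (a + (m + 1)) : R[X]) • s :=
    funext fun j => (modByMonic_add_div (c j) _).symm
  rw [hsplit, add_vecMul, smul_vecMul] at hc
  have hzero : ∀ i, (r ᵥ* P) i = 0 ∧ (s ᵥ* P) i = 0 := fun i => by
    have hdeg : ((r ᵥ* P) i).natDegree ≤ a + m :=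
      natDegree_sum_le_of_forall_le _ _ fun j _ => natDegree_mul_le_of_le (hr j) (hP j i)
    exact eq_zero_of_add_X_pow_mul_eq_zero (b := a + (m + 1)) (by lia)
      (by simpa only [Pi.add_apply, Pi.smul_apply, smul_eq_mul, Pi.zero_apply] using congrFun hc i)
  exact ⟨funext fun i => (hzero i).1, funext fun i => (hzero i).2⟩

variable {K : Type*} [Field K] {n : ℕ}

theorem polyWeight_modByMonic_X_pow_le (c : Fin n → K[X]) (b : ℕ) :
    polyWeight (fun j => c j %ₘ X ^ b) ≤ polyWeight c := by
  refine Finset.sum_le_sum fun j _ => Finset.card_le_card fun t ht => ?_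
  rw [mem_support_iff, coeff_modByMonic_X_pow] at ht
  exact mem_support_iff.2 fun h => ht (by rw [h, ite_self])

theorem polyWeight_divByMonic_X_pow_le (c : Fin n → K[X]) (b : ℕ) :
    polyWeight (fun j => c j /ₘ X ^ b) ≤ polyWeight c := by
  refine Finset.sum_le_sum fun j _ => Finset.card_le_card_of_injOn (· + b) (fun t ht => ?_)
    (add_left_injective b).injOn
  simpa [coeff_divByMonic_X_pow] using ht

theorem exists_le_polyWeight_forall_coeff_eq_zero (c : Fin n → K[X]) (m : ℕ) :
    ∃ s ≤ polyWeight c, ∀ j t, s * m ≤ t → t < s * m + m → (c j).coeff t = 0 := by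
  have hcard : ((coeffSupport c).image fun p => p.2 / m).card <
      (Finset.range (polyWeight c + 1)).card := by
    rw [Finset.card_range, ← card_coeffSupport]
    exact Nat.lt_succ_of_le Finset.card_image_le
  obtain ⟨s, hs, hsc⟩ := Finset.exists_mem_notMem_of_card_lt_card hcard
  refine ⟨s, Finset.mem_range_succ_iff.1 hs, fun j t ht htm => ?_⟩
  by_contra hne
  refine hsc (Finset.mem_image.2 ⟨⟨j, t⟩, mem_coeffSupport.2 hne, ?_⟩)
  exact Nat.div_eq_of_lt_le ht (by rwa [Nat.succ_mul])

/-- A codeword of weight `w` and degree at least `(w + 1) * (m + 1)` has a run of `m + 1` zero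
coefficients, and such a run cuts it into two shorter codewords. -/
theorem exists_polyWeight_le_degree_lt {ι : Type*} {P : Matrix (Fin n) ι K[X]} {m : ℕ}
    (hP : ∀ j i, (P j i).natDegree ≤ m) {c : Fin n → K[X]} (hc : c ᵥ* P = 0) (hc0 : c ≠ 0) :
    ∃ d, d ᵥ* P = 0 ∧ d ≠ 0 ∧ polyWeight d ≤ polyWeight c ∧
      ∀ j, (d j).degree < ((polyWeight c + 1) * (m + 1) : ℕ) := by
  obtain ⟨M, hM⟩ : ∃ M : ℕ, ∀ j t, M ≤ t → (c j).coeff t = 0 :=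
    ⟨Finset.univ.sup (fun j => (c j).natDegree) + 1, fun j t ht => coeff_eq_zero_of_natDegree_lt <|
      (Finset.le_sup (f := fun j => (c j).natDegree) (Finset.mem_univ j)).trans_lt ht⟩
  induction M generalizing c with
  | zero => exact absurd (funext fun j => ext fun t => hM j t t.zero_le) hc0
  | succ M ih =>
    obtain ⟨s, hs, hgap⟩ := exists_le_polyWeight_forall_coeff_eq_zero c (m + 1)
    set b := s * (m + 1) + (m + 1)
    obtain ⟨hr, hq⟩ := vecMul_modByMonic_divByMonic_eq_zero hP hc hgap
    by_cases hr0 : (fun j => c j %ₘ X ^ b) = 0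
    · have hq0 : (fun j => c j /ₘ X ^ b) ≠ 0 := fun hq0 => hc0 <| funext fun j => by
        rw [← modByMonic_add_div (c j) (X ^ b), congrFun hr0 j, congrFun hq0 j]
        simp
      obtain ⟨d, hd, hd0, hdw, hdeg⟩ := ih hq hq0 fun j t ht => by
        rw [coeff_divByMonic_X_pow, hM j _ (by lia)]
      have hqw := polyWeight_divByMonic_X_pow_le c b
      refine ⟨d, hd, hd0, hdw.trans hqw, fun j => (hdeg j).trans_le ?_⟩
      exact_mod_cast Nat.mul_le_mul_right (m + 1) (Nat.succ_le_succ hqw)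
    · refine ⟨_, hr, hr0, polyWeight_modByMonic_X_pow_le c b, fun j => ?_⟩
      have hb : b ≤ (polyWeight c + 1) * (m + 1) := by
        rw [show b = (s + 1) * (m + 1) from (Nat.succ_mul s (m + 1)).symm]
        exact Nat.mul_le_mul_right _ (Nat.succ_le_succ hs)
      refine (degree_modByMonic_lt _ (monic_X_pow b)).trans_le ?_
      rw [degree_X_pow]
      exact_mod_cast hb

end Gap

section Syndrome

open Matrix

universe w

theorem exists_submatrix_det_ne_zero_of_mulVec_injective {K ρ σ : Type*} [Field K] [Fintype σ]
    [DecidableEq σ] {A : Matrix ρ σ K} (hA : Function.Injective A.mulVec) :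
    ∃ f : σ → ρ, (A.submatrix f id).det ≠ 0 := by
  obtain ⟨κ, a, -, hspan, hli⟩ := exists_linearIndependent' K A.row
  have htop : Submodule.span K (Set.range A.row) = ⊤ := by
    by_contra hne
    obtain ⟨φ, hφ0, hφ⟩ := Submodule.exists_le_ker_of_lt_top _ (lt_top_iff_ne_top.2 hne)
    obtain ⟨v, rfl⟩ := (dotProductEquiv K σ).surjective φ
    have hv : A *ᵥ v = 0 := funext fun r => (dotProduct_comm _ _).trans <|
      LinearMap.mem_ker.1 (hφ (Submodule.subset_span ⟨r, rfl⟩))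
    exact hφ0 (by rw [hA (hv.trans (mulVec_zero A).symm), map_zero])
  let e : σ ≃ κ := (Pi.basisFun K σ).indexEquiv (Module.Basis.mk hli (hspan.trans htop).ge)
  refine ⟨a ∘ e, fun hdet => ?_⟩
  have hrow : LinearIndependent K (A.submatrix (a ∘ e) id).row := hli.comp e e.injective
  exact ((isUnit_iff_isUnit_det _).1 (linearIndependent_rows_iff_isUnit.1 hrow)).ne_zero hdet

variable {R : Type*} [CommRing R]

theorem exists_map_ne_zero_forall_mulVec_injective {K₀ ρ σ : Type*} [Field K₀] [Fintype σ]
    (A : Matrix ρ σ R) (f₀ : R →+* K₀) (h₀ : Function.Injective (A.map f₀).mulVec) :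
    ∃ r : R, f₀ r ≠ 0 ∧ ∀ (K : Type w) [Field K] (f : R →+* K), f r ≠ 0 →
      Function.Injective (A.map f).mulVec := by
  classical
  obtain ⟨g, hg⟩ := exists_submatrix_det_ne_zero_of_mulVec_injective h₀
  refine ⟨(A.submatrix g id).det, ?_, fun K _ f hf => ?_⟩
  · rwa [RingHom.map_det, RingHom.mapMatrix_apply, ← submatrix_map]
  · rw [RingHom.map_det, RingHom.mapMatrix_apply, ← submatrix_map] at hf
    refine (injective_iff_map_eq_zero (A.map f).mulVecLin).2 fun v hv => ?_
    exact eq_zero_of_mulVec_eq_zero hf (funext fun s => congrFun hv (g s))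

variable {ι : Type*} {n : ℕ} {S : Finset (Σ _ : Fin n, ℕ)}

/-- Column `⟨j, t⟩` holds the coefficients of `z ^ t` times row `j` of `P`, so that the columns in
`S` express `c ᵥ* P` linearly in the coefficients of a vector `c` supported on `S`. -/
noncomputable def syndromeMatrix (P : Matrix (Fin n) ι R[X])
    (S : Finset (Σ _ : Fin n, ℕ)) : Matrix (ι × ℕ) S R :=
  of fun x p => (X ^ p.1.2 * P p.1.1 x.1).coeff x.2

theorem map_syndromeMatrix {R' : Type*} [CommRing R'] (f : R →+* R')
    (P : Matrix (Fin n) ι R[X]) (S : Finset (Σ _ : Fin n, ℕ)) :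
    (syndromeMatrix P S).map f = syndromeMatrix (P.map (mapRingHom f)) S := by
  ext x p
  simp [syndromeMatrix, ← coeff_map]

/-- The vector of polynomials with coefficients `x` at the positions in `S`. -/
noncomputable def vecOfCoeffs (x : S → R) : Fin n → R[X] :=
  ∑ p : S, Pi.single p.1.1 (monomial p.1.2 (x p))

theorem coeff_vecOfCoeffs (x : S → R) (j : Fin n) (t : ℕ) :
    (vecOfCoeffs x j).coeff t = if h : ⟨j, t⟩ ∈ S then x ⟨⟨j, t⟩, h⟩ else 0 := by
  have hterm : ∀ p : S, (Pi.single (M := fun _ : Fin n => R[X]) p.1.1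
      (monomial p.1.2 (x p)) j).coeff t = if p.1 = ⟨j, t⟩ then x p else 0 := by
    rintro ⟨⟨i, s⟩, hp⟩
    rcases eq_or_ne j i with rfl | hij
    · rw [Pi.single_eq_same, coeff_monomial]
      simp
    · rw [Pi.single_eq_of_ne hij, coeff_zero, if_neg (by rintro ⟨⟩; exact hij rfl)]
  simp only [vecOfCoeffs, Finset.sum_apply, finsetSum_coeff, hterm]
  split_ifs with h
  · rw [Finset.sum_eq_single_of_mem ⟨_, h⟩ (Finset.mem_univ _), if_pos rfl]
    exact fun p _ hp => if_neg fun hpj => hp (Subtype.ext hpj)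
  · exact Finset.sum_eq_zero fun p _ => if_neg fun hpj => h (by rw [← hpj]; exact p.2)

theorem syndromeMatrix_mulVec (P : Matrix (Fin n) ι R[X]) (x : S → R) (i : ι) (t : ℕ) :
    (syndromeMatrix P S *ᵥ x) (i, t) = ((vecOfCoeffs x ᵥ* P) i).coeff t := by
  simp only [vecOfCoeffs, sum_vecMul, single_vecMul, Finset.sum_apply, finsetSum_coeff]
  refine Finset.sum_congr rfl fun p _ => ?_
  simp only [syndromeMatrix, of_apply, Pi.smul_apply, row_apply, smul_eq_mul,
    ← C_mul_X_pow_eq_monomial, mul_assoc, coeff_C_mul]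
  exact mul_comm _ _

theorem syndromeMatrix_mulVec_eq_zero_iff {P : Matrix (Fin n) ι R[X]} {x : S → R} :
    syndromeMatrix P S *ᵥ x = 0 ↔ vecOfCoeffs x ᵥ* P = 0 := by
  constructor
  · intro h
    ext i t
    rw [← syndromeMatrix_mulVec, h]
    rfl
  · intro h
    ext ⟨i, t⟩
    rw [syndromeMatrix_mulVec, h]
    rfl

theorem coeffSupport_vecOfCoeffs_subset (x : S → R) : coeffSupport (vecOfCoeffs x) ⊆ S :=
  fun p hp => by
    by_contra hpS
    exact mem_coeffSupport.1 hp (by rw [coeff_vecOfCoeffs, dif_neg hpS])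

theorem vecOfCoeffs_ne_zero {x : S → R} (hx : x ≠ 0) : vecOfCoeffs x ≠ 0 := fun h => hx <| by
  ext p
  have hp := coeff_vecOfCoeffs x p.1.1 p.1.2
  rw [dif_pos p.2, h] at hp
  exact hp.symm

theorem exists_vecOfCoeffs_eq {c : Fin n → R[X]} (hc : coeffSupport c ⊆ S) :
    ∃ x : S → R, vecOfCoeffs x = c := by
  refine ⟨fun p => (c p.1.1).coeff p.1.2, ?_⟩
  ext j t
  rw [coeff_vecOfCoeffs]
  split_ifs with h
  · rfl
  · by_contra hne
    exact h (hc (mem_coeffSupport.2 (Ne.symm hne)))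

theorem exists_map_ne_zero_forall_vecMul_ne_zero {K₀ : Type*} [Field K₀]
    (P : Matrix (Fin n) ι R[X]) (S : Finset (Σ _ : Fin n, ℕ)) (f₀ : R →+* K₀)
    (h₀ : ∀ c : Fin n → K₀[X], c ≠ 0 → coeffSupport c ⊆ S → c ᵥ* P.map (mapRingHom f₀) ≠ 0) :
    ∃ r : R, f₀ r ≠ 0 ∧ ∀ (K : Type w) [Field K] (f : R →+* K), f r ≠ 0 →
      ∀ c : Fin n → K[X], c ≠ 0 → coeffSupport c ⊆ S → c ᵥ* P.map (mapRingHom f) ≠ 0 := by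
  have hinj : Function.Injective ((syndromeMatrix P S).map f₀).mulVec := by
    refine (injective_iff_map_eq_zero (mulVecLin _)).2 fun x hx => ?_
    by_contra hx0
    rw [mulVecLin_apply, map_syndromeMatrix, syndromeMatrix_mulVec_eq_zero_iff] at hx
    exact h₀ _ (vecOfCoeffs_ne_zero hx0) (coeffSupport_vecOfCoeffs_subset x) hx
  obtain ⟨r, hr, hrf⟩ := exists_map_ne_zero_forall_mulVec_injective _ f₀ hinj
  refine ⟨r, hr, fun K _ f hf c hc0 hcS hc => hc0 ?_⟩
  obtain ⟨x, rfl⟩ := exists_vecOfCoeffs_eq hcS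
  rw [← syndromeMatrix_mulVec_eq_zero_iff, ← map_syndromeMatrix] at hc
  rw [hrf K f hf (hc.trans (mulVec_zero _).symm)]
  simp [vecOfCoeffs]

end Syndrome

section Semicontinuity

universe w

open Matrix

variable {k n : ℕ}

theorem exists_card_coeffSupport_eq_freeDist {K : Type*} [Field K] {m : ℕ}
    {G : Matrix (Fin k) (Fin n) K[X]} (hG : IsBasic G) (hG0 : rowSpan G ≠ ⊥)
    (hm : ∀ j x, (parityCheck G j x).natDegree ≤ m) :
    ∃ c, c ≠ 0 ∧ c ᵥ* parityCheck G = 0 ∧ (coeffSupport c).card = freeDist (rowSpan G) ∧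
      coeffSupport c ⊆ coeffBox n ((freeDist (rowSpan G) + 1) * (m + 1)) := by
  have hmem := fun c => mem_rowSpan_iff_vecMul_parityCheck_eq_zero hG.span_minors_eq_top (c := c)
  obtain ⟨c, hc, hc0, hcw⟩ := exists_polyWeight_eq_freeDist hG0
  obtain ⟨d, hd, hd0, hdw, hdeg⟩ := exists_polyWeight_le_degree_lt hm ((hmem c).1 hc) hc0
  rw [hcw] at hdw hdeg
  exact ⟨d, hd0, hd,
    (card_coeffSupport d).trans (hdw.antisymm (freeDist_le_polyWeight ((hmem d).2 hd) hd0)),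
    coeffSupport_subset_coeffBox hdeg⟩

theorem exists_natDegree_map_le {R ι κ : Type*} [Semiring R] [Finite ι] [Finite κ]
    (P : Matrix ι κ R[X]) :
    ∃ m : ℕ, ∀ (K : Type w) [Field K] (f : R →+* K) i j,
      (P.map (mapRingHom f) i j).natDegree ≤ m := by
  obtain ⟨m, hm⟩ := (Set.finite_range fun x : ι × κ => (P x.1 x.2).natDegree).bddAbove
  exact ⟨m, fun K _ f i j => natDegree_map_le.trans (hm ⟨(i, j), rfl⟩)⟩

theorem exists_map_ne_zero_forall_freeDist_le {R : Type*} [CommRing R]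
    (𝒢 : Matrix (Fin k) (Fin n) R[X]) {K₀ : Type*} [Field K₀] (f₀ : R →+* K₀)
    (h₀ : IsBasic (𝒢.map (mapRingHom f₀))) :
    ∃ r : R, f₀ r ≠ 0 ∧ ∀ (K : Type w) [Field K] (f : R →+* K), f r ≠ 0 →
      IsBasic (𝒢.map (mapRingHom f)) → rowSpan (𝒢.map (mapRingHom f)) ≠ ⊥ →
      freeDist (rowSpan (𝒢.map (mapRingHom f₀))) ≤ freeDist (rowSpan (𝒢.map (mapRingHom f))) := by
  set D := freeDist (rowSpan (𝒢.map (mapRingHom f₀)))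
  obtain ⟨m, hm⟩ := exists_natDegree_map_le.{w} (parityCheck 𝒢)
  have hS : ∀ S : Finset (Σ _ : Fin n, ℕ), S.card < D → ∃ r : R, f₀ r ≠ 0 ∧
      ∀ (K : Type w) [Field K] (f : R →+* K), f r ≠ 0 → ∀ c : Fin n → K[X], c ≠ 0 →
        coeffSupport c ⊆ S → c ᵥ* (parityCheck 𝒢).map (mapRingHom f) ≠ 0 := fun S hSD =>
    exists_map_ne_zero_forall_vecMul_ne_zero (parityCheck 𝒢) S f₀ fun c hc0 hcS hc => by
      rw [map_parityCheck, ← mem_rowSpan_iff_vecMul_parityCheck_eq_zero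
        h₀.span_minors_eq_top] at hc
      exact hSD.not_ge <| (freeDist_le_polyWeight hc hc0).trans <|
        (card_coeffSupport c).ge.trans (Finset.card_le_card hcS)
  choose! r hr hrf using hS
  refine ⟨∏ S ∈ (coeffBox n (D * (m + 1))).powerset with S.card < D, r S, ?_, ?_⟩
  · rw [map_prod]
    exact Finset.prod_ne_zero_iff.2 fun S hS => hr S (Finset.mem_filter.1 hS).2
  · intro K _ f hfr hf hf0
    by_contra! hlt
    obtain ⟨c, hc0, hc, hcard, hbox⟩ := exists_card_coeffSupport_eq_freeDist hf hf0
      (map_parityCheck (mapRingHom f) 𝒢 ▸ hm K f)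
    have hcD : (coeffSupport c).card < D := hcard ▸ hlt
    have hcbox := hbox.trans (coeffBox_mono n (Nat.mul_le_mul_right (m + 1) hlt))
    rw [map_prod, Finset.prod_ne_zero_iff] at hfr
    exact hrf _ hcD K f (hfr _ (Finset.mem_filter.2 ⟨Finset.mem_powerset.2 hcbox, hcD⟩)) c hc0
      subset_rfl (by rwa [map_parityCheck])

end Semicontinuity

section SingletonBound

open Matrix

variable {K : Type*} [Field K]

/-- The generalized Singleton bound on the free distance of a code of length `n`, dimension `k` and
degree `δ`; the MDS codes are those attaining it. -/
def singletonBound (n k δ : ℕ) : ℕ :=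
  (n - k) * (δ / k + 1) + δ + 1

theorem exists_ne_zero_polyWeight_le {V : Type*} [AddCommGroup V] [Module K V] {n d : ℕ}
    (f : V →ₗ[K] Fin n → K[X]) {T : Finset (Σ _ : Fin n, ℕ)} (hT : ∀ v, coeffSupport (f v) ⊆ T)
    (hd : d < Module.finrank K V) (hdT : d ≤ T.card) :
    ∃ v, v ≠ 0 ∧ polyWeight (f v) ≤ T.card - d := by
  have := Module.finite_of_finrank_pos (Nat.zero_lt_of_lt hd)
  obtain ⟨Z, hZ, rfl⟩ := Finset.exists_subset_card_eq hdT
  let g : V →ₗ[K] Z → K := LinearMap.pi fun p => lcoeff K p.1.2 ∘ₗ LinearMap.proj p.1.1 ∘ₗ f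
  have hg : LinearMap.ker g ≠ ⊥ := LinearMap.ker_ne_bot_of_finrank_lt (by simpa using hd)
  obtain ⟨v, hv, hv0⟩ := Submodule.exists_mem_ne_zero_of_ne_bot hg
  refine ⟨v, hv0, ?_⟩
  rw [← card_coeffSupport, ← Finset.card_sdiff_of_subset hZ]
  refine Finset.card_le_card fun p hp => Finset.mem_sdiff.2 ⟨hT v hp, fun hpZ => ?_⟩
  exact mem_coeffSupport.1 hp (congrFun (LinearMap.mem_ker.1 hv) ⟨p, hpZ⟩)

theorem finrank_pi_degreeLT {ι : Type*} [Fintype ι] (a : ι → ℕ) :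
    Module.finrank K (Π i, degreeLT K (a i)) = ∑ i, a i := by
  have := fun d => Module.Finite.of_basis (degreeLT.basis K d)
  rw [Module.finrank_pi_fintype]
  exact Finset.sum_congr rfl fun i _ => by
    rw [Module.finrank_eq_card_basis (degreeLT.basis K (a i)), Fintype.card_fin]

variable {k n : ℕ}

theorem coeffSupport_vecMul_subset {G : Matrix (Fin k) (Fin n) K[X]} {u : Fin k → K[X]} {L : ℕ}
    (hu : ∀ i, u i ∈ degreeLT K (L - rowDeg G i)) : coeffSupport (u ᵥ* G) ⊆ coeffBox n L := by
  refine coeffSupport_subset_coeffBox fun j => ?_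
  rw [vecMul, dotProduct, ← mem_degreeLT]
  refine Submodule.sum_mem _ fun i _ => mem_degreeLT.2 ?_
  rcases eq_or_ne (u i) 0 with hui | hui
  · simp [hui]
  have hdeg := (natDegree_lt_iff_degree_lt hui).2 (mem_degreeLT.1 (hu i))
  have hrow : (G i j).natDegree ≤ rowDeg G i :=
    Finset.le_sup (f := fun j => (G i j).natDegree) (Finset.mem_univ j)
  refine degree_le_natDegree.trans_lt (Nat.cast_lt.2 (natDegree_mul_le.trans_lt ?_))
  lia

/-- The messages `u` with all `u i * G i` of degree at most `δ / k` form a space of dimension at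
least `k * (δ / k + 1) - δ`, so one coefficient fewer than this can be made to vanish. -/
theorem freeDist_rowSpan_le (hk : 0 < k) {G : Matrix (Fin k) (Fin n) K[X]}
    (hG : LinearIndependent K[X] G.row) :
    freeDist (rowSpan G) ≤ singletonBound n k (∑ i, rowDeg G i) := by
  set δ := ∑ i, rowDeg G i with hδ
  set L := δ / k + 1
  have hkn : k ≤ n := by simpa using hG.fintype_card_le_finrank
  have hδL : δ < k * L := Nat.lt_mul_div_succ δ hk
  have hbox : k * L ≤ n * L := Nat.mul_le_mul_right L hkn
  have hdim : k * L ≤ ∑ i, (L - rowDeg G i) + δ := by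
    rw [hδ, ← Finset.sum_add_distrib]
    simpa using Finset.card_nsmul_le_sum Finset.univ (fun i => L - rowDeg G i + rowDeg G i) L
      fun i _ => le_tsub_add
  let f : (Π i, degreeLT K (L - rowDeg G i)) →ₗ[K] Fin n → K[X] :=
    G.vecMulLinear.restrictScalars K ∘ₗ LinearMap.piMap fun i => (degreeLT K _).subtype
  obtain ⟨v, hv0, hv⟩ := exists_ne_zero_polyWeight_le (d := k * L - δ - 1) f
    (fun v => coeffSupport_vecMul_subset fun i => (v i).2)
    (by rw [finrank_pi_degreeLT]; lia) (by rw [card_coeffBox]; lia)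
  have hfv : f v ≠ 0 := fun h => hv0 <| funext fun i => Subtype.ext <|
    congrFun (vecMul_injective_iff.2 hG (h.trans (zero_vecMul G).symm)) i
  have hmem : f v ∈ rowSpan G := mem_rowSpan_iff.2 ⟨_, rfl⟩
  refine (freeDist_le_polyWeight hmem hfv).trans (hv.trans ?_)
  rw [card_coeffBox, singletonBound, Nat.sub_mul]
  lia

end SingletonBound

section MDS

universe w

/-- The specialization `𝒢_α(z)` of a one-parameter family of polynomial matrices. -/
noncomputable abbrev specialization {F E κ ν : Type*} [Field F] [Field E] [Algebra F E]
    (𝒢 : Matrix κ ν F[X][X]) (α : E) : Matrix κ ν E[X] :=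
  𝒢.map (mapRingHom (aeval α : F[X] →ₐ[F] E).toRingHom)

theorem non_MDS_locus_uniformly_bounded_general {F : Type*} [Field F] {k n δ : ℕ} (hk : 0 < k)
    (𝒢 : Matrix (Fin k) (Fin n) F[X][X]) {E₀ : Type*} [Field E₀] [Algebra F E₀] (α₀ : E₀)
    (hbasic : IsBasic (specialization 𝒢 α₀))
    (hMDS : freeDist (rowSpan (specialization 𝒢 α₀)) = singletonBound n k δ) :
    ∃ N : ℕ, ∀ (E : Type w) [Field E] [Algebra F E],
      {α : E | IsCanonical (specialization 𝒢 α) ∧ degCode (specialization 𝒢 α) = δ ∧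
        freeDist (rowSpan (specialization 𝒢 α)) ≠ singletonBound n k δ}.encard ≤ N := by
  obtain ⟨r, hr, hrf⟩ := exists_map_ne_zero_forall_freeDist_le.{w} 𝒢 _ hbasic
  rw [hMDS] at hrf
  have hr0 : r ≠ 0 := by
    rintro rfl
    exact hr (map_zero _)
  refine ⟨r.natDegree, fun E _ _ => le_trans (Set.encard_le_encard ?_) <|
    (rootSet_finite r E).cast_ncard_eq.ge.trans (Nat.cast_le.2 (ncard_rootSet_le r E))⟩
  rintro α ⟨⟨hα, hred⟩, hdeg, hne⟩
  have hli := linearIndependent_row_of_span_minors_eq_top hα.span_minors_eq_top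
  have hbot : rowSpan (specialization 𝒢 α) ≠ ⊥ := fun h =>
    hli.ne_zero ⟨0, hk⟩ (Submodule.span_eq_bot.1 h _ ⟨_, rfl⟩)
  have hle := freeDist_rowSpan_le hk hli
  rw [hred, hdeg] at hle
  refine mem_rootSet.2 ⟨hr0, ?_⟩
  by_contra hrα
  exact hne (hle.antisymm (hrf E _ hrα hα hbot))

end MDS

/-- Let `𝒢(z)` be a one-parameter family of convolutional codes over a
finite field `𝔽`, with parameter space `U(𝔽′) = {α : qᵢ(α) ≠ 0 ∀i}` over each finite
extension `𝔽′` of `𝔽`, all of whose members are canonical of degree `δ`. If for some finite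
extension `𝔽″` there is a parameter `α ∈ U(𝔽″)` whose code is MDS, then there exists `N`
bounding, uniformly over all finite extensions `𝔽′` of `𝔽`, the number of parameters
`α ∈ U(𝔽′)` whose code is not MDS. -/
theorem non_MDS_locus_uniformly_bounded {F : Type} [Field F] [Fintype F]
    {k n δ t : ℕ} (hk : 0 < k)
    (𝒢 : Fin k → Fin n → Polynomial (Polynomial F))
    (q : Fin t → Polynomial F)
    (hcan : ∀ (E : FinFieldExt F) (α : E.carrier), (∀ i, Polynomial.aeval α (q i) ≠ 0) →
      IsCanonical (fun i => fun j => (𝒢 i j).map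
        (Polynomial.aeval α : Polynomial F →ₐ[F] E.carrier).toRingHom) ∧
      degCode (fun i => fun j => (𝒢 i j).map
        (Polynomial.aeval α : Polynomial F →ₐ[F] E.carrier).toRingHom) = δ)
    (hex : ∃ (E : FinFieldExt F) (α : E.carrier), (∀ i, Polynomial.aeval α (q i) ≠ 0) ∧
      freeDist (Submodule.span (Polynomial E.carrier) (Set.range fun i => fun j =>
          (𝒢 i j).map (Polynomial.aeval α : Polynomial F →ₐ[F] E.carrier).toRingHom)) =
        (n - k) * (δ / k + 1) + δ + 1) :
    ∃ N : ℕ, ∀ E : FinFieldExt F,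
      Set.ncard {α : E.carrier | (∀ i, Polynomial.aeval α (q i) ≠ 0) ∧
        freeDist (Submodule.span (Polynomial E.carrier) (Set.range fun i => fun j =>
            (𝒢 i j).map (Polynomial.aeval α : Polynomial F →ₐ[F] E.carrier).toRingHom)) ≠
          (n - k) * (δ / k + 1) + δ + 1} ≤ N := by
  obtain ⟨E₀, α₀, hα₀, hMDS⟩ := hex
  obtain ⟨N, hN⟩ := non_MDS_locus_uniformly_bounded_general hk 𝒢 α₀ (hcan E₀ α₀ hα₀).1.1 hMDS
  refine ⟨N, fun E => ENat.toNat_le_of_le_natCast ((Set.encard_le_encard ?_).trans (hN E.carrier))⟩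
  exact fun α hα => ⟨(hcan E α hα.1).1, (hcan E α hα.1).2, hα.2⟩
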